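/- arXiv:1609.06970 — 4 statements merged into one kernel-verified Lean document; each statement's English description precedes it below -/
import Mathlib

section
/- Let n ≥ 1 and a = (a_1,…,a_n) ∈ ℝⁿ with a_i ≥ 1 for all i. Then the anisotropic distance satisfies the triangle inequality: |x+y|_a ≤ |x|_a + |y|_a for all x, y ∈ ℝⁿ. -/
/-!
Let `δ_t x = (t ^ a_i • x_i)_i`. Then `|x|_a` is the scale `t` at which `‖δ_{1/t} x‖ = 1`. When
`a_i ≥ 1`, a contraction `δ_r` with `0 ≤ r ≤ 1` shrinks norms at least by the factor `r`; hence if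
`‖δ_{1/t} x‖ ≤ 1` then `‖δ_{1/w} x‖ ≤ t / w` for every `w ≥ t`. Taking `w = s + t` with `s = |x|_a`
and `t = |y|_a`, the triangle inequality of the norm gives
`‖δ_{1/w} (x + y)‖ ≤ s / w + t / w = 1`, which means `|x + y|_a ≤ w`.
-/

open MeasureTheory Complex
open scoped ENNReal NNReal BigOperators

noncomputable section

/-- Points of `ℝⁿ`, written `x = (x 0, …, x (n-1))`. -/
abbrev RV (n : ℕ) := Fin n → ℝ

/-- Tempered distributions `𝒮′(ℝⁿ)`. -/
abbrev TD (n : ℕ) := SchwartzMap (RV n) ℂ →L[ℂ] ℂ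

/-- The Fourier transform `𝓕g(ξ) = ∫ e^{-i x·ξ} g(x) dx`. -/
def FT (n : ℕ) (g : RV n → ℂ) (ξ : RV n) : ℂ :=
  ∫ x : RV n, Complex.exp (-Complex.I * ((∑ i, x i * ξ i : ℝ) : ℂ)) * g x

/-- The partial derivative `∂_i`. -/
def pderiv1 (n : ℕ) (i : Fin n) (g : RV n → ℂ) : RV n → ℂ :=
  fun x => fderiv ℝ g x (Pi.single i 1)

def pderivIter (n : ℕ) (i : Fin n) : ℕ → (RV n → ℂ) → RV n → ℂ
  | 0, g => g
  | k + 1, g => pderiv1 n i (pderivIter n i k g)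

/-- `D^α = (-i ∂_1)^{α_1} ⋯ (-i ∂_n)^{α_n}`. -/
def Dop (n : ℕ) (α : Fin n → ℕ) (g : RV n → ℂ) : RV n → ℂ :=
  fun x => (-Complex.I) ^ (∑ i, α i) *
    ((List.finRange n).foldr (fun i h => pderivIter n i (α i) h) g) x

/-- `anorm` is the anisotropic distance function `|·|_a` :
`anorm 0 = 0`, and for `x ≠ 0`, `anorm x` is the (unique) `t > 0` with
`x 1 ^ 2 / t ^ (2 a 1) + … + x n ^ 2 / t ^ (2 a n) = 1`. -/
def IsAnorm (n : ℕ) (a : Fin n → ℝ) (anorm : RV n → ℝ) : Prop :=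
  anorm 0 = 0 ∧
    ∀ x : RV n, x ≠ 0 → 0 < anorm x ∧ ∑ i, (x i : ℝ) ^ 2 / (anorm x) ^ (2 * a i) = 1

/-- Moment condition of order `M` : `D^α (𝓕ψ)(0) = 0` for all `|α| ≤ M` (void for `M = -1`). -/
def MomentCond (n : ℕ) (M : ℤ) (ψ : RV n → ℂ) : Prop :=
  ∀ α : Fin n → ℕ, (∑ i, (α i : ℤ)) ≤ M → Dop n α (FT n ψ) 0 = 0

/-- Tauberian conditions for `ε > 0` for the pair `(ψ0, ψ)`. -/
def Tauber (n : ℕ) (anorm : RV n → ℝ) (ψ0 ψ : RV n → ℂ) (ε : ℝ) : Prop :=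
  (∀ ξ, anorm ξ < 2 * ε → 0 < ‖FT n ψ0 ξ‖) ∧
    (∀ ξ, ε / 2 < anorm ξ → anorm ξ < 2 * ε → 0 < ‖FT n ψ ξ‖)

/-- The family `φ_j`, `φ_0` at `j = 0` and `φ_j(x) = 2^{j|a|} φ(2^{ja}x)` for `j ≥ 1`. -/
def fam (n : ℕ) (a : Fin n → ℝ) (φ0 φ : RV n → ℂ) : ℕ → RV n → ℂ
  | 0 => φ0
  | j + 1 => fun x =>
      (((2 : ℝ) ^ (((j : ℝ) + 1) * ∑ i, a i) : ℝ) : ℂ) *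
        φ (fun i => (2 : ℝ) ^ (((j : ℝ) + 1) * a i) * x i)

/-- Peetre–Fefferman–Stein maximal function attached to the function `F` (intended: `F = ψ_j * f`). -/
def pfs (n : ℕ) (a r : Fin n → ℝ) (F : RV n → ℂ) (j : ℕ) (x : RV n) : ℝ≥0∞ :=
  ⨆ y : RV n,
    ENNReal.ofReal (‖F y‖ / ∏ l, (1 + (2 : ℝ) ^ ((j : ℝ) * a l) * |x l - y l|) ^ (r l))

/-- Iterated-integral construction of the mixed Lebesgue norm : integrate out the
coordinates one at a time, first `x 0`, last `x (n-1)`. -/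
def mixAux (n : ℕ) (p : Fin n → ℝ≥0∞) : ℕ → ((RV n) → ℝ≥0∞) → (RV n) → ℝ≥0∞
  | 0, F => F
  | l + 1, F => fun x =>
      if h : l < n then
        (if p ⟨l, h⟩ = ∞ then
          essSup (fun t : ℝ => mixAux n p l F (Function.update x ⟨l, h⟩ t)) volume
        else
          (∫⁻ t : ℝ, (mixAux n p l F (Function.update x ⟨l, h⟩ t)) ^ (p ⟨l, h⟩).toReal) ^
            (1 / (p ⟨l, h⟩).toReal))
      else mixAux n p l F x

/-- The mixed Lebesgue quasi-norm `‖F | L_{p̄}‖` of an extended-nonnegative-valued `F`. -/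
def mixedNorm (n : ℕ) (p : Fin n → ℝ≥0∞) (F : RV n → ℝ≥0∞) : ℝ≥0∞ :=
  mixAux n p n F fun _ => 0

/-- `‖(u_k) | L_{p̄}(ℓ_q)‖`. -/
def seqNorm (n : ℕ) (p : Fin n → ℝ≥0∞) (q : ℝ≥0∞) (u : ℕ → RV n → ℝ≥0∞) : ℝ≥0∞ :=
  mixedNorm n p fun x =>
    if q = ∞ then ⨆ k, u k x else (∑' k, u k x ^ q.toReal) ^ (1 / q.toReal)

/-- Convolution of (Schwartz) functions. -/
def conv2 (n : ℕ) (f g : RV n → ℂ) (x : RV n) : ℂ := ∫ y : RV n, f y * g (x - y)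

/-- Schwartz seminorm `p_{α,β}(φ) = sup_x |x^α D^β φ(x)|`, valued in `[0,∞]`. -/
def pSemiE (n : ℕ) (α β : Fin n → ℕ) (g : RV n → ℂ) : ℝ≥0∞ :=
  ⨆ x : RV n, (‖((∏ i, x i ^ α i : ℝ) : ℂ) * Dop n β g x‖₊ : ℝ≥0∞)

/-- Schwartz seminorm `q_{N,γ}(φ) = ∫ (1+|x|²)^{N/2} |D^γ φ(x)| dx`, valued in `[0,∞]`. -/
def qSemiE (n : ℕ) (N : ℝ) (γ : Fin n → ℕ) (g : RV n → ℂ) : ℝ≥0∞ :=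
  ∫⁻ x : RV n, ENNReal.ofReal ((1 + ∑ i, (x i) ^ 2) ^ (N / 2)) * (‖Dop n γ g x‖₊ : ℝ≥0∞)

/-- Iterated Laplacian `Δ^N`. -/
def lapIter (n : ℕ) : ℕ → (RV n → ℂ) → RV n → ℂ
  | 0, g => g
  | N + 1, g => fun x => ∑ i, pderiv1 n i (pderiv1 n i (lapIter n N g)) x

/-- The box `B_{R,j} = {ξ : |ξ_k| ≤ R 2^{j a_k}}`. -/
def specBox (n : ℕ) (a : Fin n → ℝ) (R : ℝ) (j : ℕ) : Set (RV n) :=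
  {ξ | ∀ k, |ξ k| ≤ R * (2 : ℝ) ^ ((j : ℝ) * a k)}

/-- The spectral condition `supp 𝓕u ⊆ B_{R,j}` for a temperate-growth function `u`. -/
def SpecCond (n : ℕ) (a : Fin n → ℝ) (R : ℝ) (j : ℕ) (u : RV n → ℂ) : Prop :=
  ∀ φ : SchwartzMap (RV n) ℂ,
    tsupport (⇑φ) ∩ specBox n a R j = ∅ → (∫ x : RV n, u x * FT n (⇑φ) x) = 0

/-- The maximal function `u^*` of Section 3. -/
def ustar (n : ℕ) (a r : Fin n → ℝ) (R : ℝ) (j : ℕ) (u : RV n → ℂ) (x : RV n) : ℝ≥0∞ :=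
  ⨆ y : RV n,
    ENNReal.ofReal (‖u y‖ / ∏ l, (1 + R * (2 : ℝ) ^ ((j : ℝ) * a l) * |x l - y l|) ^ (r l))

lemma piLp_norm_le_norm_of_apply_le {ι : Type*} [Fintype ι] {E : ι → Type*}
    [∀ i, SeminormedAddCommGroup (E i)] {p : ℝ≥0∞} [Fact (1 ≤ p)] {x y : PiLp p E}
    (h : ∀ i, ‖x i‖ ≤ ‖y i‖) : ‖x‖ ≤ ‖y‖ := by
  rcases p.dichotomy with rfl | hp
  · exact ciSup_mono (Set.finite_range _).bddAbove h
  · have hp0 : 0 < p.toReal := zero_lt_one.trans_le hp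
    rw [PiLp.norm_eq_sum hp0, PiLp.norm_eq_sum hp0]
    gcongr with i
    exact h i

section Dilation

variable {ι : Type*} {E : ι → Type*} {p : ℝ≥0∞} {a : ι → ℝ}

section Seminormed

variable [∀ i, SeminormedAddCommGroup (E i)] [∀ i, NormedSpace ℝ (E i)]

/-- The anisotropic dilation `δ_t x = (t ^ a_i • x_i)_i`, often written `t ^ a x`, on an `ℓ^p`
product of seminormed spaces. -/
def anisoDilation (a : ι → ℝ) (t : ℝ) : PiLp p E →ₗ[ℝ] PiLp p E where
  toFun x := WithLp.toLp p fun i => t ^ a i • x i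
  map_add' x y := by ext i; simp
  map_smul' c x := by ext i; exact smul_comm _ c (x i)

@[simp]
lemma anisoDilation_apply (t : ℝ) (x : PiLp p E) (i : ι) :
    anisoDilation a t x i = t ^ a i • x i :=
  rfl

lemma anisoDilation_mul {r s : ℝ} (hr : 0 ≤ r) (hs : 0 ≤ s) (x : PiLp p E) :
    anisoDilation a (r * s) x = anisoDilation a r (anisoDilation a s x) := by
  ext i
  simp [Real.mul_rpow hr hs, mul_smul]

variable [Fintype ι]

lemma norm_anisoDilation_inv_sq {t : ℝ} (ht : 0 ≤ t) (x : PiLp 2 E) :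
    ‖anisoDilation a t⁻¹ x‖ ^ 2 = ∑ i, ‖x i‖ ^ 2 / t ^ (2 * a i) := by
  rw [PiLp.norm_sq_eq_of_L2]
  refine Finset.sum_congr rfl fun i _ => ?_
  have hpow : t ^ (2 * a i) = (t ^ a i) ^ 2 := by
    rw [mul_comm]
    exact_mod_cast Real.rpow_mul_natCast ht (a i) 2
  rw [anisoDilation_apply, Real.inv_rpow ht, norm_smul, norm_inv,
    Real.norm_of_nonneg (Real.rpow_nonneg ht _), hpow]
  ring

variable [Fact (1 ≤ p)]

lemma norm_anisoDilation_le (ha : ∀ i, 1 ≤ a i) {r : ℝ} (hr : 0 ≤ r) (hr1 : r ≤ 1)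
    (x : PiLp p E) : ‖anisoDilation a r x‖ ≤ r * ‖x‖ := by
  rw [← norm_smul_of_nonneg hr]
  refine piLp_norm_le_norm_of_apply_le fun i => ?_
  rw [anisoDilation_apply, PiLp.smul_apply, norm_smul_of_nonneg (Real.rpow_nonneg hr _),
    norm_smul_of_nonneg hr]
  gcongr
  exact Real.rpow_le_self_of_le_one hr hr1 (ha i)

lemma norm_anisoDilation_inv_le_div (ha : ∀ i, 1 ≤ a i) {t w : ℝ} (ht : 0 < t) (htw : t ≤ w)
    {x : PiLp p E} (hx : ‖anisoDilation a t⁻¹ x‖ ≤ 1) : ‖anisoDilation a w⁻¹ x‖ ≤ t / w := by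
  have hw : 0 < w := ht.trans_le htw
  calc ‖anisoDilation a w⁻¹ x‖ = ‖anisoDilation a (t / w) (anisoDilation a t⁻¹ x)‖ := by
        rw [← anisoDilation_mul (by positivity) (by positivity)]
        congr 3
        field_simp
    _ ≤ t / w * ‖anisoDilation a t⁻¹ x‖ :=
        norm_anisoDilation_le ha (by positivity) (div_le_one_of_le₀ htw hw.le) _
    _ ≤ t / w := mul_le_of_le_one_right (by positivity) hx

lemma norm_anisoDilation_inv_add_le_one (ha : ∀ i, 1 ≤ a i) {s t : ℝ} (hs : 0 < s) (ht : 0 < t)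
    {x y : PiLp p E} (hx : ‖anisoDilation a s⁻¹ x‖ ≤ 1) (hy : ‖anisoDilation a t⁻¹ y‖ ≤ 1) :
    ‖anisoDilation a (s + t)⁻¹ (x + y)‖ ≤ 1 := by
  calc ‖anisoDilation a (s + t)⁻¹ (x + y)‖
      ≤ ‖anisoDilation a (s + t)⁻¹ x‖ + ‖anisoDilation a (s + t)⁻¹ y‖ := by
        rw [map_add]
        exact norm_add_le _ _
    _ ≤ s / (s + t) + t / (s + t) :=
        add_le_add (norm_anisoDilation_inv_le_div ha hs (by linarith) hx)
          (norm_anisoDilation_inv_le_div ha ht (by linarith) hy)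
    _ = 1 := by rw [← add_div, div_self (by positivity)]

end Seminormed

section Normed

variable [Fintype ι] [∀ i, NormedAddCommGroup (E i)] [∀ i, NormedSpace ℝ (E i)] [Fact (1 ≤ p)]

/-- `d` is an anisotropic distance function on an `ℓ^p` product of normed spaces: `d 0 = 0`, and
for `x ≠ 0` the value `d x` is a scale `t > 0` with `‖δ_{1/t} x‖ = 1`. For `p = 2` and real
coordinates this is `IsAnorm`. -/
structure IsAnisoDist (a : ι → ℝ) (d : PiLp p E → ℝ) : Prop where
  map_zero : d 0 = 0
  pos : ∀ {x}, x ≠ 0 → 0 < d x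
  norm_dilation_inv : ∀ {x}, x ≠ 0 → ‖anisoDilation a (d x)⁻¹ x‖ = 1

variable {d : PiLp p E → ℝ}

lemma IsAnisoDist.le_of_norm_dilation_inv_le_one (hd : IsAnisoDist a d) (ha : ∀ i, 1 ≤ a i)
    {t : ℝ} (ht : 0 < t) {x : PiLp p E} (hx : ‖anisoDilation a t⁻¹ x‖ ≤ 1) : d x ≤ t := by
  rcases eq_or_ne x 0 with rfl | hx0
  · exact hd.map_zero.trans_le ht.le
  by_contra! hlt
  have hle : 1 ≤ t / d x :=
    (hd.norm_dilation_inv hx0).symm.trans_le (norm_anisoDilation_inv_le_div ha ht hlt.le hx)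
  exact hle.not_gt ((div_lt_one (hd.pos hx0)).2 hlt)

theorem stmt2_general (hd : IsAnisoDist a d) (ha : ∀ i, 1 ≤ a i) (x y : PiLp p E) :
    d (x + y) ≤ d x + d y := by
  rcases eq_or_ne x 0 with rfl | hx
  · simp [hd.map_zero]
  rcases eq_or_ne y 0 with rfl | hy
  · simp [hd.map_zero]
  exact hd.le_of_norm_dilation_inv_le_one ha (add_pos (hd.pos hx) (hd.pos hy)) <|
    norm_anisoDilation_inv_add_le_one ha (hd.pos hx) (hd.pos hy)
      (hd.norm_dilation_inv hx).le (hd.norm_dilation_inv hy).le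

end Normed

end Dilation

lemma IsAnorm.isAnisoDist {n : ℕ} {a : Fin n → ℝ} {anorm : RV n → ℝ} (h : IsAnorm n a anorm) :
    IsAnisoDist a fun x : EuclideanSpace ℝ (Fin n) => anorm x.ofLp where
  map_zero := h.1
  pos hx := (h.2 _ ((WithLp.ofLp_eq_zero 2).not.2 hx)).1
  norm_dilation_inv {x} hx := by
    obtain ⟨hpos, hsum⟩ := h.2 x.ofLp ((WithLp.ofLp_eq_zero 2).not.2 hx)
    rw [← sq_eq_sq₀ (norm_nonneg _) zero_le_one, norm_anisoDilation_inv_sq hpos.le, one_pow]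
    simpa only [Real.norm_eq_abs, sq_abs] using hsum

/-- triangle inequality for the anisotropic distance when `a ≥ 1`. -/
theorem stmt2 (n : ℕ) (hn : 1 ≤ n) (a : Fin n → ℝ) (ha : ∀ i, 1 ≤ a i)
    (anorm : RV n → ℝ) (h : IsAnorm n a anorm) :
    ∀ x y : RV n, anorm (x + y) ≤ anorm x + anorm y :=
  fun x y => stmt2_general h.isAnisoDist ha (WithLp.toLp 2 x) (WithLp.toLp 2 y)
end
end

section
/- Let n ≥ 1 and a = (a_1,…,a_n) ∈ ℝⁿ with a_i > 0 for all i, and set d := min(1, a_1, …, a_n). Then for all x, y ∈ ℝⁿ: |x+y|_a^d ≤ |x|_a^d + |y|_a^d. -/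
open MeasureTheory Complex
open scoped ENNReal NNReal BigOperators

noncomputable section

/-!
For the dilations `δ_r x = (r^{a_1} x_1, …, r^{a_n} x_n)`, the number `|x|_a` is the `t > 0` with
`‖δ_{1/t} x‖ = 1` in the Euclidean norm. Write `t := |x + y|_a` and suppose `|x|_a, |y|_a ≤ t`, as
the inequality is trivial otherwise. As `d ≤ a_i`, `‖δ_r u‖ ≤ r^d ‖u‖` for `0 < r ≤ 1`, hence
`‖δ_{1/t} x‖ = ‖δ_{|x|_a/t} δ_{1/|x|_a} x‖ ≤ (|x|_a/t)^d`, and likewise for `y`. The Euclidean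
triangle inequality then gives `1 = ‖δ_{1/t} (x + y)‖ ≤ (|x|_a/t)^d + (|y|_a/t)^d`.
-/

theorem lt_ciInf_of_finite {ι α : Type*} [Finite ι] [Nonempty ι]
    [ConditionallyCompleteLinearOrder α] {b : α} {f : ι → α} (hf : ∀ i, b < f i) :
    b < ⨅ i, f i := by
  obtain ⟨i, hi⟩ := exists_eq_ciInf_of_finite (f := f)
  exact hi ▸ hf i

section Dilation

variable {ι : Type*} (a : ι → ℝ)

/-- The anisotropic dilation `δ_r x = (r ^ a i * x i)_i`, used to read the defining equation of
`|·|_a` as a statement about Euclidean norms. It acts on `EuclideanSpace` because plain functions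
carry the sup norm, and it is meant for `0 ≤ r` only (`Real.rpow` at negative bases is junk). -/
def dilation (r : ℝ) : EuclideanSpace ℝ ι →ₗ[ℝ] EuclideanSpace ℝ ι where
  toFun x := WithLp.toLp 2 fun i => r ^ a i * x i
  map_add' x y := by ext i; simp [mul_add]
  map_smul' c x := by ext i; simp [mul_left_comm]

@[simp]
theorem dilation_apply (r : ℝ) (x : EuclideanSpace ℝ ι) (i : ι) :
    dilation a r x i = r ^ a i * x i := rfl

theorem dilation_mul {r s : ℝ} (hr : 0 ≤ r) (hs : 0 ≤ s) (x : EuclideanSpace ℝ ι) :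
    dilation a (r * s) x = dilation a r (dilation a s x) := by
  ext i
  simp [Real.mul_rpow hr hs, mul_assoc]

variable [Fintype ι]

theorem norm_dilation_inv_sq {t : ℝ} (ht : 0 ≤ t) (x : EuclideanSpace ℝ ι) :
    ‖dilation a t⁻¹ x‖ ^ 2 = ∑ i, x i ^ 2 / t ^ (2 * a i) := by
  rw [EuclideanSpace.real_norm_sq_eq]
  refine Finset.sum_congr rfl fun i _ => ?_
  rw [dilation_apply, mul_pow, Real.inv_rpow ht, inv_pow, mul_comm 2 (a i), Real.rpow_mul ht,
    Real.rpow_two, inv_mul_eq_div]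

variable {a}

theorem norm_dilation_le {d r : ℝ} (hda : ∀ i, d ≤ a i) (hr : 0 < r) (hr1 : r ≤ 1)
    (x : EuclideanSpace ℝ ι) : ‖dilation a r x‖ ≤ r ^ d * ‖x‖ := by
  refine (sq_le_sq₀ (norm_nonneg _) (by positivity)).1 ?_
  rw [mul_pow, EuclideanSpace.real_norm_sq_eq, EuclideanSpace.real_norm_sq_eq, Finset.mul_sum]
  refine Finset.sum_le_sum fun i _ => ?_
  rw [dilation_apply, mul_pow]
  have hrda : r ^ a i ≤ r ^ d := Real.rpow_le_rpow_of_exponent_ge hr hr1 (hda i)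
  gcongr

end Dilation

namespace IsAnorm

variable {n : ℕ} {a : Fin n → ℝ} {anorm : RV n → ℝ}

theorem nonneg (h : IsAnorm n a anorm) (x : RV n) : 0 ≤ anorm x := by
  rcases eq_or_ne x 0 with rfl | hx
  · exact h.1.ge
  · exact (h.2 x hx).1.le

theorem norm_dilation_inv (h : IsAnorm n a anorm) {x : RV n} (hx : x ≠ 0) :
    ‖dilation a (anorm x)⁻¹ (WithLp.toLp 2 x)‖ = 1 := by
  rw [← sq_eq_sq₀ (norm_nonneg _) zero_le_one, one_pow, norm_dilation_inv_sq a (h.nonneg x)]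
  exact (h.2 x hx).2

theorem norm_dilation_inv_le (h : IsAnorm n a anorm) {d t : ℝ} (hda : ∀ i, d ≤ a i) (ht : 0 < t)
    {x : RV n} (hxt : anorm x ≤ t) :
    ‖dilation a t⁻¹ (WithLp.toLp 2 x)‖ ≤ (anorm x / t) ^ d := by
  rcases eq_or_ne x 0 with rfl | hx
  · rw [WithLp.toLp_zero, map_zero, norm_zero, h.1, zero_div]
    exact Real.rpow_nonneg le_rfl d
  have hpos : 0 < anorm x := (h.2 x hx).1
  calc ‖dilation a t⁻¹ (WithLp.toLp 2 x)‖
      = ‖dilation a (anorm x / t) (dilation a (anorm x)⁻¹ (WithLp.toLp 2 x))‖ := by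
        rw [← dilation_mul a (by positivity) (by positivity)]
        congr 3
        field_simp
    _ ≤ (anorm x / t) ^ d * ‖dilation a (anorm x)⁻¹ (WithLp.toLp 2 x)‖ :=
        norm_dilation_le hda (div_pos hpos ht) ((div_le_one ht).2 hxt) _
    _ = (anorm x / t) ^ d := by rw [h.norm_dilation_inv hx, mul_one]

end IsAnorm

theorem stmt4_general {n : ℕ} {a : Fin n → ℝ} {anorm : RV n → ℝ} (h : IsAnorm n a anorm) {d : ℝ}
    (hd : 0 < d) (hda : ∀ i, d ≤ a i) (x y : RV n) :
    anorm (x + y) ^ d ≤ anorm x ^ d + anorm y ^ d := by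
  have hxd : 0 ≤ anorm x ^ d := Real.rpow_nonneg (h.nonneg x) d
  have hyd : 0 ≤ anorm y ^ d := Real.rpow_nonneg (h.nonneg y) d
  rcases eq_or_ne (x + y) 0 with hxy | hxy
  · rw [hxy, h.1, Real.zero_rpow hd.ne']
    exact add_nonneg hxd hyd
  have hnorm := h.norm_dilation_inv hxy
  have ht : 0 < anorm (x + y) := (h.2 _ hxy).1
  generalize anorm (x + y) = t at hnorm ht ⊢
  rcases le_total t (anorm x) with htx | hxt
  · exact le_add_of_le_of_nonneg (Real.rpow_le_rpow ht.le htx hd.le) hyd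
  rcases le_total t (anorm y) with hty | hyt
  · exact le_add_of_nonneg_of_le hxd (Real.rpow_le_rpow ht.le hty hd.le)
  rw [← one_le_div (Real.rpow_pos_of_pos ht d)]
  calc 1 = ‖dilation a t⁻¹ (WithLp.toLp 2 x) + dilation a t⁻¹ (WithLp.toLp 2 y)‖ := by
        rw [← map_add, ← WithLp.toLp_add, hnorm]
    _ ≤ (anorm x / t) ^ d + (anorm y / t) ^ d :=
        norm_add_le_of_le (h.norm_dilation_inv_le hda ht hxt) (h.norm_dilation_inv_le hda ht hyt)
    _ = (anorm x ^ d + anorm y ^ d) / t ^ d := by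
        rw [Real.div_rpow (h.nonneg x) ht.le, Real.div_rpow (h.nonneg y) ht.le, add_div]

/-- the `d`-triangle inequality, `d = min(1, a_1, …, a_n)`. -/
theorem stmt4 (n : ℕ) (hn : 1 ≤ n) (a : Fin n → ℝ) (ha : ∀ i, 0 < a i)
    (anorm : RV n → ℝ) (h : IsAnorm n a anorm) :
    ∀ x y : RV n,
      anorm (x + y) ^ (min 1 (⨅ i, a i)) ≤
        anorm x ^ (min 1 (⨅ i, a i)) + anorm y ^ (min 1 (⨅ i, a i)) := by
  have : Nonempty (Fin n) := Fin.pos_iff_nonempty.mp hn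
  exact stmt4_general h (lt_min one_pos (lt_ciInf_of_finite ha))
    fun i => (min_le_right _ _).trans (Finite.ciInf_le a i)
end
end

section
/- Let n ≥ 1 and a = (a_1,…,a_n) ∈ ℝⁿ with a_i > 0 for all i. Then the map x ↦ |x|_a is infinitely differentiable (C^∞) on ℝⁿ ∖ {0}. -/
open MeasureTheory Complex
open scoped ENNReal NNReal BigOperators

noncomputable section

/-
In the variable `s = log t` the equation defining `|x|_a` reads `|e^{-sa} x|² = 1`, where the left
side is real-analytic in `(x, s)` and, for `x ≠ 0`, has negative derivative in `s`. The implicit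
function theorem therefore yields an analytic local solution `s`; strict monotonicity in `s` makes
it the only solution, so it is `log |x|_a`.
-/

section ImplicitFunction

open scoped Topology ContDiff

theorem isInvertible_of_isUnit_apply_one {R : Type*} [Semiring R] [TopologicalSpace R]
    [ContinuousMul R] {f : R →L[R] R} (hf : IsUnit (f 1)) : f.IsInvertible := by
  obtain ⟨u, hu⟩ := hf
  exact ⟨ContinuousLinearEquiv.unitsEquivAut R u, by ext; simp [hu]⟩

theorem fderiv_comp_inr_apply_one {𝕜 E F : Type*} [NontriviallyNormedField 𝕜]
    [NormedAddCommGroup E] [NormedSpace 𝕜 E] [NormedAddCommGroup F] [NormedSpace 𝕜 F]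
    {f : E × 𝕜 → F} {p : E × 𝕜} (hf : DifferentiableAt 𝕜 f p) :
    (fderiv 𝕜 f p ∘L .inr 𝕜 E 𝕜) 1 = deriv (fun t => f (p.1, t)) p.2 := by
  have hpath : HasDerivAt (fun t : 𝕜 => (p.1, t)) ((0 : E), (1 : 𝕜)) p.2 :=
    (hasDerivAt_const _ _).prodMk (hasDerivAt_id _)
  exact (hf.hasFDerivAt.comp_hasDerivAt p.2 hpath).deriv.symm

variable {𝕜 E F G : Type*} [RCLike 𝕜] [NormedAddCommGroup E] [NormedSpace 𝕜 E] [CompleteSpace E]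
  [NormedAddCommGroup F] [NormedSpace 𝕜 F] [CompleteSpace F]
  [NormedAddCommGroup G] [NormedSpace 𝕜 G] [CompleteSpace G]
  {m : ℕ∞ω} {x₀ : E}

theorem contDiffAt_of_implicit_equation {f : E × F → G} {g : E → F}
    (hf : ContDiffAt 𝕜 m f (x₀, g x₀)) (hm : m ≠ 0)
    (hinv : (fderiv 𝕜 f (x₀, g x₀) ∘L .inr 𝕜 E F).IsInvertible)
    (hfg : ∀ᶠ x in 𝓝 x₀, f (x, g x) = f (x₀, g x₀))
    (hinj : ∀ᶠ x in 𝓝 x₀, Function.Injective fun y => f (x, y)) :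
    ContDiffAt 𝕜 m g x₀ := by
  refine (hf.contDiffAt_implicitFunction hm hinv).congr_of_eventuallyEq ?_
  filter_upwards [hf.eventually_apply_implicitFunction hm hinv, hfg, hinj]
    with x hψ hg hx
  exact hx (hg.trans hψ.symm)

theorem contDiffAt_of_implicit_equation_of_deriv_ne_zero {f : E × 𝕜 → 𝕜} {g : E → 𝕜}
    (hf : ContDiffAt 𝕜 m f (x₀, g x₀)) (hm : m ≠ 0)
    (hf' : deriv (fun t => f (x₀, t)) (g x₀) ≠ 0)
    (hfg : ∀ᶠ x in 𝓝 x₀, f (x, g x) = f (x₀, g x₀))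
    (hinj : ∀ᶠ x in 𝓝 x₀, Function.Injective fun t => f (x, t)) :
    ContDiffAt 𝕜 m g x₀ := by
  refine contDiffAt_of_implicit_equation hf hm (isInvertible_of_isUnit_apply_one ?_) hfg hinj
  rw [fderiv_comp_inr_apply_one (hf.differentiableAt hm)]
  exact hf'.isUnit

end ImplicitFunction

section Dilation

open scoped ContDiff

variable {ι : Type*} [Fintype ι] {a x : ι → ℝ}

/-- The squared Euclidean length `|e^{-sa} x|²` of the image of `x` under the anisotropic dilation
`x ↦ (t^{a_i} x_i)_i` with `t = e^{-s}`. The dilation parameter is taken logarithmically so that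
the function is analytic on the whole space and `|x|_a` is `e^s` for its solution `s` of
`|e^{-sa} x|² = 1`. -/
def dilationNormSq (a x : ι → ℝ) (s : ℝ) : ℝ :=
  ∑ i, (Real.exp (-(a i * s)) * x i) ^ 2

theorem contDiff_dilationNormSq (a : ι → ℝ) {m : ℕ∞ω} :
    ContDiff ℝ m fun p : (ι → ℝ) × ℝ => dilationNormSq a p.1 p.2 := by
  unfold dilationNormSq
  fun_prop

theorem dilationNormSq_log (a x : ι → ℝ) {t : ℝ} (ht : 0 < t) :
    dilationNormSq a x (Real.log t) = ∑ i, x i ^ 2 / t ^ (2 * a i) := by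
  refine Finset.sum_congr rfl fun i _ => ?_
  have hexp : Real.exp (-(a i * Real.log t)) = (t ^ a i)⁻¹ := by
    rw [Real.exp_neg, mul_comm, Real.rpow_def_of_pos ht]
  have hrpow : t ^ (2 * a i) = (t ^ a i) ^ 2 := by
    rw [mul_comm, Real.rpow_mul ht.le, Real.rpow_two]
  rw [hexp, hrpow, mul_pow, inv_pow, div_eq_inv_mul]

theorem hasDerivAt_dilationNormSq (a x : ι → ℝ) (s : ℝ) :
    HasDerivAt (dilationNormSq a x)
      (-∑ i, 2 * a i * (Real.exp (-(a i * s)) * x i) ^ 2) s := by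
  rw [← Finset.sum_neg_distrib]
  refine HasDerivAt.fun_sum fun i _ => ?_
  have hlin : HasDerivAt (fun s => -(a i * s)) (-(a i * 1)) s :=
    ((hasDerivAt_id s).const_mul (a i)).fun_neg
  refine ((hlin.exp.mul_const (x i)).fun_pow 2).congr_deriv ?_
  ring

theorem deriv_dilationNormSq_neg (ha : ∀ i, 0 < a i) (hx : x ≠ 0) (s : ℝ) :
    deriv (dilationNormSq a x) s < 0 := by
  obtain ⟨j, hj⟩ : ∃ j, x j ≠ 0 := Function.ne_iff.mp hx
  rw [(hasDerivAt_dilationNormSq a x s).deriv, neg_lt_zero]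
  refine Finset.sum_pos' (fun i _ => ?_) ⟨j, Finset.mem_univ j, ?_⟩
  · have := ha i
    positivity
  · have := ha j
    positivity

theorem strictAnti_dilationNormSq (ha : ∀ i, 0 < a i) (hx : x ≠ 0) :
    StrictAnti (dilationNormSq a x) :=
  strictAnti_of_deriv_neg (deriv_dilationNormSq_neg ha hx)

theorem contDiffAt_of_dilationNormSq_eq_one (ha : ∀ i, 0 < a i) {σ : (ι → ℝ) → ℝ}
    (hσ : ∀ y, y ≠ 0 → dilationNormSq a y (σ y) = 1) (hx : x ≠ 0) :
    ContDiffAt ℝ ω σ x := by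
  have hne : ∀ᶠ y in nhds x, y ≠ 0 := isOpen_ne.mem_nhds hx
  refine contDiffAt_of_implicit_equation_of_deriv_ne_zero
    (f := fun p => dilationNormSq a p.1 p.2) (contDiff_dilationNormSq a).contDiffAt (by simp)
    (deriv_dilationNormSq_neg ha hx (σ x)).ne ?_ ?_
  · exact hne.mono fun y hy => (hσ y hy).trans (hσ x hx).symm
  · exact hne.mono fun y hy => (strictAnti_dilationNormSq ha hy).injective

theorem stmt5_general (ha : ∀ i, 0 < a i) {ρ : (ι → ℝ) → ℝ}
    (hρ : ∀ x, x ≠ 0 → 0 < ρ x ∧ ∑ i, x i ^ 2 / ρ x ^ (2 * a i) = 1) :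
    ContDiffOn ℝ ω ρ {x | x ≠ 0} := by
  have hlog : ContDiffOn ℝ ω (fun x => Real.log (ρ x)) {x | x ≠ 0} := fun x hx =>
    (contDiffAt_of_dilationNormSq_eq_one ha
      (fun y hy => (dilationNormSq_log a y (hρ y hy).1).trans (hρ y hy).2) hx).contDiffWithinAt
  exact hlog.exp.congr fun x hx => (Real.exp_log (hρ x hx).1).symm

end Dilation

/-- `x ↦ |x|_a` is `C^∞` on `ℝⁿ ∖ {0}`. -/
theorem stmt5 (n : ℕ) (hn : 1 ≤ n) (a : Fin n → ℝ) (ha : ∀ i, 0 < a i)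
    (anorm : RV n → ℝ) (h : IsAnorm n a anorm) :
    ContDiffOn ℝ (⊤ : ℕ∞) anorm {x : RV n | x ≠ 0} :=
  (stmt5_general ha h.2).of_le le_top
end
end

section
/- Let (b_j)_{j≥0} and (d_j)_{j≥0} be two sequences in [0,∞], let 0 < r ≤ 1 and let j_0 ≥ 0 be an integer. Assume: (i) there exist real numbers C, N_0 > 0 such that d_j ≤ C·2^{jN_0} for all j ≥ j_0; and (ii) for every N > 0 there exists a real number C_N such that d_j ≤ C_N · ∑_{k=j}^∞ 2^{(j−k)N} b_k d_k^{1−r} for all j ≥ j_0. Then, with the same constants C_N, for every N > 0 and every j ≥ j_0: d_j^r ≤ C_N · ∑_{k=j}^∞ 2^{(j−k)Nr} b_k. -/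
open MeasureTheory Complex
open scoped ENNReal NNReal BigOperators

noncomputable section

/-
For `N ≥ N₀` the growth bound makes `D = sup_{k ≥ j} 2^{(j-k)N} d_k` finite. Inserting the
hypothesis into `D`, and using `2^{(j-k)N} 2^{(k-l)N} = 2^{(j-l)N}`, gives
`D ≤ (C_N ∑ 2^{(j-k)Nr} b_k) D^{1-r}`; dividing by the finite `D^{1-r}` and using `d_j ≤ D` yields
the claim. Since `2^{(j-k)N}` decreases in `N`, the claim for a large exponent gives it for every
smaller `N`, but with the wrong constant. That estimate shows that `D` is finite for the smaller `N`
as well (unless the right-hand side is infinite), so the argument can be repeated to restore `C_N`.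
-/

lemma rpow_le_of_le_mul_rpow_one_sub {x c : ℝ≥0∞} {r : ℝ} (hr : 0 < r) (hx : x ≠ ∞)
    (h : x ≤ c * x ^ (1 - r)) : x ^ r ≤ c := by
  rcases eq_or_ne x 0 with rfl | hx0
  · simp [ENNReal.zero_rpow_of_pos hr]
  · calc x ^ r = x / x ^ (1 - r) := by
          simpa using ENNReal.rpow_sub 1 (1 - r) hx0 hx
      _ ≤ c := ENNReal.div_le_of_le_mul h

section Kernel

variable {ι : Type*} {W : ι → ι → ℝ≥0∞} {b d : ι → ℝ≥0∞} {A : ℝ≥0∞} {r : ℝ} {j : ι}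

lemma kernel_mul_le_rpow_mul_iSup_rpow (hr0 : 0 ≤ r) (hr1 : r ≤ 1) (k : ι) :
    W j k * d k ^ (1 - r) ≤ W j k ^ r * (⨆ l, W j l * d l) ^ (1 - r) := by
  have hr1' : 0 ≤ 1 - r := sub_nonneg.mpr hr1
  have split : W j k = W j k ^ r * W j k ^ (1 - r) := by
    rw [← ENNReal.rpow_add_of_nonneg _ _ hr0 hr1', add_sub_cancel, ENNReal.rpow_one]
  calc W j k * d k ^ (1 - r) = W j k ^ r * (W j k * d k) ^ (1 - r) := by
        rw [ENNReal.mul_rpow_of_nonneg _ _ hr1', ← mul_assoc, ← split]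
    _ ≤ W j k ^ r * (⨆ l, W j l * d l) ^ (1 - r) := by
        gcongr
        exact le_iSup (fun l ↦ W j l * d l) k

lemma iSup_kernel_mul_le_mul_rpow (hW : ∀ j k l, W j k * W k l ≤ W j l)
    (hr0 : 0 ≤ r) (hr1 : r ≤ 1)
    (hd : ∀ k, W j k ≠ 0 → d k ≤ A * ∑' l, W k l * b l * d l ^ (1 - r)) :
    ⨆ k, W j k * d k ≤ (A * ∑' l, W j l ^ r * b l) * (⨆ k, W j k * d k) ^ (1 - r) := by
  set D := ⨆ k, W j k * d k
  have insert_hd (k : ι) :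
      W j k * d k ≤ W j k * (A * ∑' l, W k l * b l * d l ^ (1 - r)) := by
    rcases eq_or_ne (W j k) 0 with h0 | h0
    · simp [h0]
    · gcongr
      exact hd k h0
  refine iSup_le fun k ↦ (insert_hd k).trans ?_
  calc W j k * (A * ∑' l, W k l * b l * d l ^ (1 - r))
      = A * ∑' l, (W j k * W k l) * d l ^ (1 - r) * b l := by
        rw [mul_left_comm, ← ENNReal.tsum_mul_left]
        congr! 3
        ring
    _ ≤ A * ∑' l, W j l ^ r * D ^ (1 - r) * b l := by
        gcongr A * ∑' l, ?_ * b l with l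
        calc W j k * W k l * d l ^ (1 - r) ≤ W j l * d l ^ (1 - r) := by
              gcongr
              exact hW j k l
          _ ≤ W j l ^ r * D ^ (1 - r) := kernel_mul_le_rpow_mul_iSup_rpow hr0 hr1 l
    _ = (A * ∑' l, W j l ^ r * b l) * D ^ (1 - r) := by
        rw [mul_assoc, ← ENNReal.tsum_mul_right]
        congr! 3
        ring

lemma rpow_le_tsum_of_iSup_ne_top (hW : ∀ j k l, W j k * W k l ≤ W j l) (hjj : 1 ≤ W j j)
    (hr0 : 0 < r) (hr1 : r ≤ 1)
    (hd : ∀ k, W j k ≠ 0 → d k ≤ A * ∑' l, W k l * b l * d l ^ (1 - r))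
    (hfin : ⨆ k, W j k * d k ≠ ∞) :
    d j ^ r ≤ A * ∑' k, W j k ^ r * b k := by
  have d_le_iSup : d j ≤ ⨆ k, W j k * d k :=
    (le_mul_of_one_le_left' hjj).trans (le_iSup (fun k ↦ W j k * d k) j)
  exact (ENNReal.rpow_le_rpow d_le_iSup hr0.le).trans <|
    rpow_le_of_le_mul_rpow_one_sub hr0 hfin (iSup_kernel_mul_le_mul_rpow hW hr0.le hr1 hd)

lemma kernel_rpow_mul_tsum_le (hW : ∀ j k l, W j k * W k l ≤ W j l) (hr : 0 ≤ r) (k : ι) :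
    W j k ^ r * ∑' l, W k l ^ r * b l ≤ ∑' l, W j l ^ r * b l := by
  rw [← ENNReal.tsum_mul_left]
  refine ENNReal.tsum_le_tsum fun l ↦ ?_
  rw [← mul_assoc, ← ENNReal.mul_rpow_of_nonneg _ _ hr]
  gcongr
  exact hW j k l

lemma iSup_kernel_mul_rpow_le_tsum (hW : ∀ j k l, W j k * W k l ≤ W j l) (hr : 0 < r)
    (hd : ∀ k, W j k ≠ 0 → d k ^ r ≤ A * ∑' l, W k l ^ r * b l) :
    (⨆ k, W j k * d k) ^ r ≤ A * ∑' l, W j l ^ r * b l := by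
  rw [← ENNReal.le_rpow_inv_iff hr]
  refine iSup_le fun k ↦ (ENNReal.le_rpow_inv_iff hr).mpr ?_
  rcases eq_or_ne (W j k) 0 with h0 | h0
  · simp [h0, ENNReal.zero_rpow_of_pos hr]
  calc (W j k * d k) ^ r = W j k ^ r * d k ^ r := ENNReal.mul_rpow_of_nonneg _ _ hr.le
    _ ≤ W j k ^ r * (A * ∑' l, W k l ^ r * b l) := by
        gcongr
        exact hd k h0
    _ = A * (W j k ^ r * ∑' l, W k l ^ r * b l) := mul_left_comm ..
    _ ≤ A * ∑' l, W j l ^ r * b l := by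
        gcongr
        exact kernel_rpow_mul_tsum_le hW hr.le k

lemma rpow_le_tsum_of_rpow_le_tsum (hW : ∀ j k l, W j k * W k l ≤ W j l) (hjj : 1 ≤ W j j)
    (hr0 : 0 < r) (hr1 : r ≤ 1)
    (hd : ∀ k, W j k ≠ 0 → d k ≤ A * ∑' l, W k l * b l * d l ^ (1 - r))
    {A' : ℝ≥0∞} (hA' : A' ≠ ∞)
    (hd' : ∀ k, W j k ≠ 0 → d k ^ r ≤ A' * ∑' l, W k l ^ r * b l) :
    d j ^ r ≤ A * ∑' k, W j k ^ r * b k := by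
  rcases eq_or_ne A 0 with rfl | hA
  · have hdj : d j = 0 := by simpa using hd j (one_pos.trans_le hjj).ne'
    simp [hdj, ENNReal.zero_rpow_of_pos hr0]
  rcases eq_or_ne (∑' k, W j k ^ r * b k) ∞ with hS | hS
  · simp [hS, ENNReal.mul_top hA]
  refine rpow_le_tsum_of_iSup_ne_top hW hjj hr0 hr1 hd fun htop ↦ ?_
  have h := iSup_kernel_mul_rpow_le_tsum hW hr0 hd'
  rw [htop, ENNReal.top_rpow_of_pos hr0, top_le_iff] at h
  exact ENNReal.mul_ne_top hA' hS h

end Kernel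

section DyadicKernel

variable {ι : Type*} [Preorder ι] [DecidableLE ι] {t : ι → ℝ}

/-- The one-sided dyadic weight `2 ^ ((t j - t k) * N)` of decay rate `N` on indices `j ≤ k` placed
at scale `t`. It vanishes unless `j ≤ k`, so that a sum over `k ≥ j` becomes a sum over all `k`. -/
def dyadicKernel (t : ι → ℝ) (N : ℝ) (j k : ι) : ℝ≥0∞ :=
  if j ≤ k then ENNReal.ofReal ((2 : ℝ) ^ ((t j - t k) * N)) else 0

lemma le_of_dyadicKernel_ne_zero {N : ℝ} {j k : ι} (h : dyadicKernel t N j k ≠ 0) : j ≤ k :=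
  of_not_not fun hjk ↦ h (if_neg hjk)

lemma dyadicKernel_self (N : ℝ) (j : ι) : dyadicKernel t N j j = 1 := by
  simp [dyadicKernel]

lemma dyadicKernel_mul_dyadicKernel_le (N : ℝ) (j k l : ι) :
    dyadicKernel t N j k * dyadicKernel t N k l ≤ dyadicKernel t N j l := by
  by_cases hjk : j ≤ k
  · by_cases hkl : k ≤ l
    · simp only [dyadicKernel, hjk, hkl, hjk.trans hkl, if_true]
      rw [← ENNReal.ofReal_mul (by positivity), ← Real.rpow_add two_pos, ← add_mul,
        sub_add_sub_cancel]
    · simp [dyadicKernel, hkl]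
  · simp [dyadicKernel, hjk]

lemma dyadicKernel_rpow (N : ℝ) {r : ℝ} (hr : 0 < r) (j k : ι) :
    dyadicKernel t N j k ^ r = dyadicKernel t (N * r) j k := by
  unfold dyadicKernel
  split_ifs
  · rw [ENNReal.ofReal_rpow_of_nonneg (by positivity) hr.le, ← Real.rpow_mul zero_le_two, mul_assoc]
  · exact ENNReal.zero_rpow_of_pos hr

lemma dyadicKernel_antitone (ht : Monotone t) (j k : ι) :
    Antitone fun N ↦ dyadicKernel t N j k := by
  intro N M hNM
  dsimp only [dyadicKernel]
  split_ifs with hjk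
  · gcongr ENNReal.ofReal (2 ^ ?_)
    · exact one_le_two
    · exact mul_le_mul_of_nonpos_left hNM (sub_nonpos.mpr (ht hjk))
  · exact le_rfl

lemma dyadicKernel_mul_le_of_growth {d : ι → ℝ≥0∞} {C N : ℝ} {j : ι}
    (hd : ∀ k, j ≤ k → d k ≤ ENNReal.ofReal (C * (2 : ℝ) ^ (t k * N))) (k : ι) :
    dyadicKernel t N j k * d k ≤ ENNReal.ofReal (C * (2 : ℝ) ^ (t j * N)) := by
  by_cases hjk : j ≤ k
  · calc dyadicKernel t N j k * d k
        ≤ ENNReal.ofReal ((2 : ℝ) ^ ((t j - t k) * N)) *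
            ENNReal.ofReal (C * (2 : ℝ) ^ (t k * N)) := by
          rw [dyadicKernel, if_pos hjk]
          gcongr
          exact hd k hjk
      _ = ENNReal.ofReal (C * (2 : ℝ) ^ (t j * N)) := by
          rw [← ENNReal.ofReal_mul (by positivity), mul_left_comm, ← Real.rpow_add two_pos,
            ← add_mul, sub_add_cancel]
  · simp [dyadicKernel, hjk]

lemma iSup_dyadicKernel_mul_ne_top (ht : Monotone t) {d : ι → ℝ≥0∞} {C N₀ N : ℝ} (hN : N₀ ≤ N)
    {j : ι} (hd : ∀ k, j ≤ k → d k ≤ ENNReal.ofReal (C * (2 : ℝ) ^ (t k * N₀))) :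
    ⨆ k, dyadicKernel t N j k * d k ≠ ∞ := by
  suffices bound : ⨆ k, dyadicKernel t N j k * d k ≤ ENNReal.ofReal (C * (2 : ℝ) ^ (t j * N₀)) from
    ne_top_of_le_ne_top ENNReal.ofReal_ne_top bound
  refine iSup_le fun k ↦ ?_
  calc dyadicKernel t N j k * d k ≤ dyadicKernel t N₀ j k * d k := by
        gcongr
        exact dyadicKernel_antitone ht j k hN
    _ ≤ ENNReal.ofReal (C * (2 : ℝ) ^ (t j * N₀)) := dyadicKernel_mul_le_of_growth hd k

theorem stmt7_general (ht : Monotone t) (b d : ι → ℝ≥0∞) {r : ℝ} (hr0 : 0 < r) (hr1 : r ≤ 1)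
    (j₀ : ι) (C N₀ : ℝ) (growth : ∀ j, j₀ ≤ j → d j ≤ ENNReal.ofReal (C * (2 : ℝ) ^ (t j * N₀)))
    {I : Set ℝ} (hI : ¬BddAbove I) (CN : ℝ → ℝ)
    (hd : ∀ N ∈ I, ∀ j, j₀ ≤ j →
      d j ≤ ENNReal.ofReal (CN N) *
        ∑' k, if j ≤ k then
          ENNReal.ofReal ((2 : ℝ) ^ ((t j - t k) * N)) * b k * d k ^ (1 - r) else 0) :
    ∀ N ∈ I, ∀ j, j₀ ≤ j →
      d j ^ r ≤ ENNReal.ofReal (CN N) *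
        ∑' k, if j ≤ k then ENNReal.ofReal ((2 : ℝ) ^ ((t j - t k) * N * r)) * b k else 0 := by
  have kernel_hd {N : ℝ} (hN : N ∈ I) {j : ι} (hj : j₀ ≤ j) (k : ι)
      (hk : dyadicKernel t N j k ≠ 0) :
      d k ≤ ENNReal.ofReal (CN N) * ∑' l, dyadicKernel t N k l * b l * d l ^ (1 - r) := by
    simpa only [dyadicKernel, ite_mul, zero_mul]
      using hd N hN k (hj.trans (le_of_dyadicKernel_ne_zero hk))
  intro N hN j hj
  obtain ⟨M, hM, hNM⟩ := not_bddAbove_iff.mp hI (max N N₀)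
  obtain ⟨hN_le, hN₀_le⟩ := max_le_iff.mp hNM.le
  have large_exponent (k : ι) (hk : j₀ ≤ k) :
      d k ^ r ≤ ENNReal.ofReal (CN M) * ∑' l, dyadicKernel t M k l ^ r * b l :=
    rpow_le_tsum_of_iSup_ne_top (dyadicKernel_mul_dyadicKernel_le M) (dyadicKernel_self M k).ge
      hr0 hr1 (kernel_hd hM hk)
      (iSup_dyadicKernel_mul_ne_top ht hN₀_le fun l hl ↦ growth l (hk.trans hl))
  have wrong_constant (k : ι) (hk : dyadicKernel t N j k ≠ 0) :
      d k ^ r ≤ ENNReal.ofReal (CN M) * ∑' l, dyadicKernel t N k l ^ r * b l := by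
    refine (large_exponent k (hj.trans (le_of_dyadicKernel_ne_zero hk))).trans ?_
    gcongr with l
    exact dyadicKernel_antitone ht k l hN_le
  have right_constant : d j ^ r ≤ ENNReal.ofReal (CN N) * ∑' k, dyadicKernel t N j k ^ r * b k :=
    rpow_le_tsum_of_rpow_le_tsum (dyadicKernel_mul_dyadicKernel_le N) (dyadicKernel_self N j).ge
      hr0 hr1 (kernel_hd hN hj) ENNReal.ofReal_ne_top wrong_constant
  simp only [dyadicKernel_rpow N hr0] at right_constant
  simpa only [dyadicKernel, ite_mul, zero_mul, mul_assoc] using right_constant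

end DyadicKernel

/-- the summation Lemma 2.8 (Lemma `sum2-lem`). -/
theorem stmt7 (b d : ℕ → ℝ≥0∞) (r : ℝ) (hr0 : 0 < r) (hr1 : r ≤ 1) (j0 : ℕ)
    (C N0 : ℝ) (hC : 0 < C) (hN0 : 0 < N0)
    (h1 : ∀ j, j0 ≤ j → d j ≤ ENNReal.ofReal (C * (2:ℝ) ^ ((j:ℝ) * N0)))
    (CN : ℝ → ℝ)
    (h2 : ∀ N : ℝ, 0 < N → ∀ j, j0 ≤ j →
      d j ≤ ENNReal.ofReal (CN N) *
        ∑' k : ℕ, if j ≤ k then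
          ENNReal.ofReal ((2:ℝ) ^ (((j:ℝ) - (k:ℝ)) * N)) * b k * d k ^ (1 - r) else 0) :
    ∀ N : ℝ, 0 < N → ∀ j, j0 ≤ j →
      d j ^ r ≤ ENNReal.ofReal (CN N) *
        ∑' k : ℕ, if j ≤ k then
          ENNReal.ofReal ((2:ℝ) ^ (((j:ℝ) - (k:ℝ)) * N * r)) * b k else 0 :=
  stmt7_general Nat.mono_cast b d hr0 hr1 j0 C N0 h1 (not_bddAbove_Ioi 0) CN h2
end
end
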